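/- For every sufficiently large n, there is a graph on n vertices with minimum degree at least log n that contains no cycle of length shorter than log n/(4·log log n). -/

import Mathlib

/-!
STATEMENT 12: For every sufficiently large `n`, there is a graph on `n` vertices with
minimum degree at least `log n` that contains no cycle of length shorter than
`log n/(4·log log n)`.
-/

namespace Paper

/-!
Add edges greedily, each one raising the degree of some vertex `v` that is still below `d`, and
joining `v` to a vertex `w` of degree below `4 * d` that is too far from `v` to create a short
cycle. Every edge is charged to a vertex that was below degree `d`, so there are at most `d * n`
edges and at most half of the vertices have degree `4 * d` or more. As the maximum degree stays
at most `4 * d`, fewer than half of the vertices are close to `v`. Hence a suitable `w` exists as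
long as some degree is below `d`.
-/

open Filter SimpleGraph
open scoped Finset

section DistanceAndGirth

variable {V : Type*} {G : SimpleGraph V} {u v : V}

theorem edist_deleteEdges_add_one_le_length {a : V} {c : G.Walk a a} (hc : c.IsTrail)
    (he : s(u, v) ∈ c.edges) : (G.deleteEdges {s(u, v)}).edist u v + 1 ≤ c.length := by
  obtain ⟨d, hd, hde⟩ : ∃ d ∈ c.darts, d.edge = s(u, v) := List.mem_map.1 he
  obtain ⟨p, q, rfl⟩ := (Walk.isSubwalk_toWalk_adj_iff_mem_darts c).2 hd
  have havoid : s(u, v) ∉ (q.append p).edges := by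
    have hnodup : (p.edges ++ s(u, v) :: q.edges).Nodup := by
      simpa [Dart.edge, ← hde] using hc.edges_nodup
    simpa [and_comm] using (List.nodup_cons.1 (List.nodup_middle.1 hnodup)).1
  have hedist : (G.deleteEdges {s(u, v)}).edist d.snd d.fst =
      (G.deleteEdges {s(u, v)}).edist u v := by
    rcases Sym2.eq_iff.1 hde with ⟨rfl, rfl⟩ | ⟨rfl, rfl⟩
    · exact edist_comm
    · rfl
  calc (G.deleteEdges {s(u, v)}).edist u v + 1
      ≤ ((q.append p).toDeleteEdge s(u, v) havoid).length + 1 := by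
        grw [← hedist, edist_le]
    _ = ((p.append d.adj.toWalk).append q).length := by
        simp only [Walk.length_transfer, Walk.length_append, Walk.length_cons, Walk.length_nil]
        push_cast
        ring

theorem min_egirth_edist_add_one_le_egirth_sup_edge (G : SimpleGraph V) (u v : V) :
    min G.egirth (G.edist u v + 1) ≤ (G ⊔ edge u v).egirth := by
  refine le_egirth.2 fun a c hc ↦ min_le_iff.2 ?_
  by_cases huv : s(u, v) ∈ c.edges
  · right
    have hle : (G ⊔ edge u v).deleteEdges {s(u, v)} ≤ G := by simp [deleteEdges_sup]
    grw [edist_anti hle]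
    exact edist_deleteEdges_add_one_le_length hc.isTrail huv
  · left
    have hG : ∀ e ∈ c.edges, e ∈ G.edgeSet := by
      intro e he
      have hne : e ≠ s(u, v) := fun h ↦ huv (h ▸ he)
      simpa [hne] using c.edges_subset_edgeSet he
    simpa using egirth_le_length (hc.transfer hG)

theorem exists_mem_ball_mem_ball_two {r : ℕ} (h : u ∈ G.ball v (r + 2)) :
    ∃ w ∈ G.ball v (r + 1), u ∈ G.ball w 2 := by
  rw [mem_ball] at h
  obtain ⟨p, hp⟩ := exists_walk_of_edist_ne_top (h.trans_le le_top).ne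
  cases p with
  | nil => exact ⟨u, by simp, by simp⟩
  | @cons _ w _ huw q =>
    refine ⟨w, ?_, by simp [huw.symm]⟩
    have hq : q.length < r + 1 := by
      rw [← hp, Walk.length_cons] at h
      norm_cast at h
      omega
    exact (edist_le q).trans_lt (by exact_mod_cast hq)

theorem encard_ball_le {D : ℕ} (hD : ∀ u, (G.neighborSet u).encard ≤ D) (v : V) (r : ℕ) :
    (G.ball v (r + 1)).encard ≤ (D + 1) ^ r := by
  induction r with
  | zero => simp
  | succ r ih =>
    have hfin : (G.ball v (r + 1)).Finite :=
      Set.finite_of_encard_le_coe (k := (D + 1) ^ r) (by exact_mod_cast ih)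
    have hsub : G.ball v (r + 1 + 1) ⊆ ⋃ w ∈ hfin.toFinset, G.ball w 2 := by
      intro u hu
      rw [add_assoc, one_add_one_eq_two] at hu
      simpa using exists_mem_ball_mem_ball_two hu
    have hball (w : V) : (G.ball w 2).encard ≤ D + 1 := by
      grw [ball_two, Set.encard_insert_le, hD]
    calc (G.ball v (↑(r + 1) + 1)).encard
        ≤ ∑ w ∈ hfin.toFinset, (G.ball w 2).encard := by
          grw [Nat.cast_succ, hsub, Finset.set_encard_biUnion_le]
      _ ≤ (G.ball v (r + 1)).encard * (D + 1) := by
          grw [Finset.sum_le_card_nsmul _ _ _ fun w _ ↦ hball w, nsmul_eq_mul,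
            hfin.encard_eq_coe_toFinset_card]
      _ ≤ (D + 1) ^ (r + 1) := by grw [ih, pow_succ]

end DistanceAndGirth

section DegreeCounting

theorem exists_notMem_lt_two_mul {α : Type*} [Fintype α] {f : α → ℕ} {c : ℕ} {s : Set α}
    (hc : 0 < c) (hf : ∑ a, f a ≤ c * Fintype.card α) (hs : 2 * s.encard < Fintype.card α) :
    ∃ a ∉ s, f a < 2 * c := by
  classical
  by_contra! hlarge
  have hsum : #s.toFinsetᶜ * (2 * c) ≤ c * Fintype.card α :=
    calc #s.toFinsetᶜ * (2 * c)
        ≤ ∑ a ∈ s.toFinsetᶜ, f a :=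
          Finset.card_nsmul_le_sum _ _ _ fun a ha ↦ hlarge a (by simpa using ha)
      _ ≤ ∑ a, f a := Finset.sum_le_univ_sum_of_nonneg fun _ ↦ Nat.zero_le _
      _ ≤ c * Fintype.card α := hf
  have hcompl : 2 * #s.toFinsetᶜ ≤ Fintype.card α := by nlinarith
  have hcard : 2 * #s.toFinset < Fintype.card α := by
    rw [Set.encard_eq_coe_toFinset_card] at hs
    exact_mod_cast hs
  have := s.toFinset.card_add_card_compl
  omega

variable {V : Type*} {u v : V}

theorem degree_edge [DecidableEq V] (huv : u ≠ v) (w : V) [Fintype ((edge u v).neighborSet w)] :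
    (edge u v).degree w = if w ∈ s(u, v) then 1 else 0 := by
  split_ifs with hw
  · rw [degree_eq_one_iff_existsUnique_adj]
    obtain rfl | rfl := Sym2.mem_iff.1 hw
    · exact ⟨v, by grind, by grind⟩
    · exact ⟨u, by grind, by grind⟩
  · rw [degree_eq_zero]
    simp only [IsIsolated, edge_adj]
    grind

theorem degree_sup_edge {G : SimpleGraph V} [DecidableEq V] (huv : u ≠ v) (hadj : ¬ G.Adj u v)
    (w : V) [Fintype (G.neighborSet w)] [Fintype ((G ⊔ edge u v).neighborSet w)] :
    (G ⊔ edge u v).degree w = G.degree w + if w ∈ s(u, v) then 1 else 0 := by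
  have hsub : (edge u v).neighborSet w ⊆ (G ⊔ edge u v).neighborSet w := fun _ ↦ Or.inr
  have := ((Set.toFinite _).subset hsub).fintype
  rw [← degree_edge huv, ← card_neighborFinset_eq_degree,
    neighborFinset_sup_of_disjoint _ ((disjoint_edge _).2 hadj), Finset.card_disjUnion,
    card_neighborFinset_eq_degree, card_neighborFinset_eq_degree]

end DegreeCounting

open scoped Classical in
/-- The invariant of a greedy construction of graphs of girth at least `g` and minimum degree at
least `d`. The last field records that every edge can be charged to an endpoint whose degree was
below `d` when the edge was added. -/
structure IsFrugal {V : Type*} [Fintype V] (d : ℕ) (g : ℕ∞) (G : SimpleGraph V) : Prop where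
  le_egirth : g ≤ G.egirth
  degree_le : ∀ v, G.degree v ≤ 4 * d
  card_edgeFinset_le : #G.edgeFinset ≤ ∑ v, min (G.degree v) d

namespace IsFrugal

variable {V : Type*} [Fintype V] {G : SimpleGraph V} {d : ℕ} {g : ℕ∞} {u v : V}

theorem bot : IsFrugal d g (⊥ : SimpleGraph V) where
  le_egirth := by simp
  degree_le := by simp
  card_edgeFinset_le := by simp

open scoped Classical in
theorem sup_edge (hG : IsFrugal d g G) (hne : u ≠ v) (hadj : ¬ G.Adj u v) (hu : G.degree u < d)
    (hv : G.degree v < 4 * d) (hdist : g ≤ G.edist u v + 1) : IsFrugal d g (G ⊔ edge u v) where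
  le_egirth :=
    (le_min hG.le_egirth hdist).trans (min_egirth_edist_add_one_le_egirth_sup_edge G u v)
  degree_le w := by
    have := hG.degree_le w
    rw [degree_sup_edge hne hadj]
    split_ifs with hw
    · rcases Sym2.mem_iff.1 hw with rfl | rfl <;> omega
    · omega
  card_edgeFinset_le := by
    have hsum : ∑ w, min (G.degree w) d < ∑ w, min ((G ⊔ edge u v).degree w) d := by
      refine Finset.sum_lt_sum (fun w _ ↦ min_le_min_right d (degree_le_of_le le_sup_left))
        ⟨u, Finset.mem_univ u, ?_⟩
      rw [degree_sup_edge hne hadj, if_pos (Sym2.mem_mk_left u v)]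
      omega
    have hcard : #G.edgeFinset + 1 ≤ ∑ w, min ((G ⊔ edge u v).degree w) d :=
      hG.card_edgeFinset_le.trans_lt hsum
    convert (G.card_edgeFinset_sup_edge hadj hne).trans_le hcard

open scoped Classical in
theorem sum_degree_le (hG : IsFrugal d g G) : ∑ v, G.degree v ≤ 2 * d * Fintype.card V :=
  calc ∑ v, G.degree v
      = 2 * #G.edgeFinset := G.sum_degrees_eq_twice_card_edges
    _ ≤ 2 * ∑ v, min (G.degree v) d := by grw [hG.card_edgeFinset_le]
    _ ≤ 2 * ∑ _v : V, d := by
        gcongr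
        exact min_le_right _ _
    _ = 2 * d * Fintype.card V := by
        simp only [Finset.sum_const, Finset.card_univ, smul_eq_mul]
        ring

open scoped Classical in
theorem exists_far_degree_lt (hG : IsFrugal d g G) (hd : 0 < d) {r : ℕ}
    (hcard : 2 * (4 * d + 1) ^ r < Fintype.card V) (v : V) :
    ∃ w, r + 1 ≤ G.edist v w ∧ G.degree w < 4 * d := by
  have hdeg (u : V) : (G.neighborSet u).encard ≤ (4 * d : ℕ) := by
    rw [Set.encard_eq_coe_toFinset_card, ← neighborFinset_def, card_neighborFinset_eq_degree]
    exact_mod_cast hG.degree_le u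
  have hball : 2 * (G.ball v (r + 1)).encard < Fintype.card V := by
    grw [encard_ball_le hdeg v r]
    exact_mod_cast hcard
  obtain ⟨w, hw, hlt⟩ := exists_notMem_lt_two_mul (by positivity) hG.sum_degree_le hball
  rw [mem_ball, not_lt, edist_comm] at hw
  exact ⟨w, hw, by omega⟩

end IsFrugal

open scoped Classical in
theorem exists_le_degree_le_egirth {V : Type*} [Fintype V] {d r : ℕ}
    (hcard : 2 * (4 * d + 1) ^ (r + 1) < Fintype.card V) :
    ∃ G : SimpleGraph V, (∀ v, d ≤ G.degree v) ∧ r + 3 ≤ G.egirth := by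
  obtain ⟨G, -, hmax⟩ := Finite.exists_le_maximal (IsFrugal.bot (V := V) (d := d) (g := r + 3))
  refine ⟨G, fun v ↦ ?_, hmax.prop.le_egirth⟩
  by_contra! hv
  obtain ⟨w, hfar, hw⟩ := hmax.prop.exists_far_degree_lt (by omega) hcard v
  have hone : 1 < G.edist v w := lt_of_lt_of_le (by norm_cast; omega) hfar
  have hne : v ≠ w := fun h ↦ by simp [h] at hone
  have hadj : ¬ G.Adj v w := fun h ↦ hone.ne' (edist_eq_one_iff_adj.2 h)
  have hdist : r + 3 ≤ G.edist v w + 1 := by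
    grw [← hfar]
    norm_cast
  exact hmax.not_prop_of_gt (lt_sup_edge _ _ _ hne hadj) (hmax.prop.sup_edge hne hadj hv hw hdist)

theorem eventually_two_mul_pow_lt_exp : ∀ᶠ x : ℝ in atTop,
    2 * (4 * (⌈x⌉₊ : ℝ) + 1) ^ (⌈x / (4 * Real.log x)⌉₊ + 1) < Real.exp x := by
  have hlog : ∀ᶠ x : ℝ in atTop, ‖Real.log x‖ ≤ 1 / 11 * ‖x‖ :=
    Real.isLittleO_log_id_atTop.bound (by norm_num)
  filter_upwards [hlog, eventually_ge_atTop 6] with x hlog hx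
  have hlog_pos : 0 < Real.log x := Real.log_pos (by linarith)
  rw [Real.norm_of_nonneg hlog_pos.le, Real.norm_of_nonneg (by linarith)] at hlog
  set k := ⌈x / (4 * Real.log x)⌉₊
  have hk : k < x / (4 * Real.log x) + 1 := Nat.ceil_lt_add_one (by positivity)
  have hbase : 4 * (⌈x⌉₊ : ℝ) + 1 ≤ x ^ 2 := by
    have := Nat.ceil_lt_add_one (show 0 ≤ x by linarith)
    nlinarith
  calc 2 * (4 * (⌈x⌉₊ : ℝ) + 1) ^ (k + 1)
      ≤ x * (x ^ 2) ^ (k + 1) := by gcongr; linarith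
    _ = x ^ (2 * k + 3) := by ring
    _ < Real.exp x := by
      rw [← Real.log_lt_iff_lt_exp (by positivity), Real.log_pow]
      push_cast
      calc (2 * k + 3) * Real.log x
          < (2 * (x / (4 * Real.log x) + 1) + 3) * Real.log x := by gcongr
        _ = x / 2 + 5 * Real.log x := by field_simp; ring
        _ ≤ x := by linarith

theorem large_min_degree_no_short_cycles :
    ∃ n₀ : ℕ, ∀ n : ℕ, n₀ ≤ n →
      ∃ G : SimpleGraph (Fin n),
        (∀ v : Fin n, Real.log n ≤ ((G.neighborSet v).ncard : ℝ)) ∧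
        ∀ (v : Fin n) (w : G.Walk v v), w.IsCycle →
          Real.log n / (4 * Real.log (Real.log n)) ≤ (w.length : ℝ) := by
  classical
  have hlog : Tendsto (fun n : ℕ ↦ Real.log n) atTop atTop :=
    Real.tendsto_log_atTop.comp tendsto_natCast_atTop_atTop
  obtain ⟨n₀, hn₀⟩ := eventually_atTop.1
    ((hlog.eventually eventually_two_mul_pow_lt_exp).and (eventually_gt_atTop 0))
  refine ⟨n₀, fun n hn ↦ ?_⟩
  obtain ⟨hlt, hpos⟩ := hn₀ n hn
  rw [Real.exp_log (by exact_mod_cast hpos)] at hlt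
  obtain ⟨G, hdeg, hgirth⟩ := exists_le_degree_le_egirth (V := Fin n) (d := ⌈Real.log n⌉₊)
    (r := ⌈Real.log n / (4 * Real.log (Real.log n))⌉₊)
    (by rw [Fintype.card_fin]; exact_mod_cast hlt)
  refine ⟨G, fun v ↦ Nat.ceil_le.1 ?_, fun v w hw ↦ Nat.ceil_le.1 ?_⟩
  · rw [Set.ncard_eq_toFinset_card', ← neighborFinset_def, card_neighborFinset_eq_degree]
    exact hdeg v
  · exact le_self_add.trans (by exact_mod_cast le_egirth.1 hgirth v w hw)

end Paper
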